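/- arXiv:2304.05061 — 2 statements merged into one kernel-verified Lean document; each statement's English description precedes it below -/
import Mathlib

section
/- Let a(x) ∈ ℚ(x). If y ∈ ℚ̄(x)^{alg}, i.e. y is a nonzero element algebraic over ℚ(x), satisfies y' = a(x)·y, then a(x) has at most simple poles, each with rational residue, and vanishes at infinity. Conversely, if a(x) = Σ_{i=1}^m e_i/(x − a_i) with e_i ∈ ℚ and a_i ∈ ℚ̄, then f(x) = Π_i (x − a_i)^{e_i} is a nonzero algebraic solution of y' = a(x)·y. -/
/-!
If `y` is algebraic of degree `n` over `ℚ(x)` with `y' = a y` and minimal polynomial `p`, then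
differentiating `p(y) = 0` and subtracting `n a p(y)` gives a relation of degree `< n` for `y`,
which therefore vanishes identically. Its constant coefficient says that `r = p(0) ≠ 0` satisfies
`r' = n a r`. (Up to sign `r` is the norm of `y`; no expansion of `y` in Puiseux series is needed.)
So `a = r' / (n r)` for some `r ∈ ℚ(x)`, and factoring the numerator and denominator of `r` over the
algebraic closure shows that `r'/r` is a sum of terms `k / (x - c)` with `k ∈ ℤ`.

Conversely, if `n` is a common denominator of the residues `e i`, then `R = ∏ (x - c i) ^ (n * e i)`
lies in `ℚ̄(x)` and `R'/R = n a`. The derivation of `ℚ̄(x)` extends to the splitting field of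
`T ^ n - R`, and any root `y` there satisfies `n y'/y = R'/R = n a`. It is algebraic over `ℚ(x)`
because `x` and all the constants `c i` are.
-/

open Polynomial

/-- Formal derivative of a rational function, via the quotient rule on the
canonical numerator/denominator representation. -/
noncomputable def rderiv {F : Type*} [Field F] (f : RatFunc F) : RatFunc F :=
  algebraMap (Polynomial F) (RatFunc F)
      (Polynomial.derivative f.num * f.denom - f.num * Polynomial.derivative f.denom) /
    algebraMap (Polynomial F) (RatFunc F) (f.denom ^ 2)

/-- Base change of a rational function along a field embedding `f : F →+* L`. -/
noncomputable def liftRF {F L : Type*} [Field F] [Field L] (f : F →+* L)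
    (b : RatFunc F) : RatFunc L :=
  algebraMap (Polynomial L) (RatFunc L) (b.num.map f) /
    algebraMap (Polynomial L) (RatFunc L) (b.denom.map f)

/-- A nonzero algebraic solution of `y' = a(x)·y`: a field extension `K` of `ℚ(x)`
equipped with a derivation `δ` extending `d/dx` on `ℚ(x)`, together with a nonzero
element `y ∈ K` algebraic over `ℚ(x)` satisfying `δ y = a·y`. -/
structure AlgSolOrderOne (a : RatFunc ℚ) where
  K : Type
  [fieldK : Field K]
  [algK : Algebra (RatFunc ℚ) K]
  δ : K → K
  y : K
  map_add : ∀ u v : K, δ (u + v) = δ u + δ v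
  leibniz : ∀ u v : K, δ (u * v) = δ u * v + u * δ v
  extends_deriv : ∀ r : RatFunc ℚ, δ (algebraMap (RatFunc ℚ) K r) =
    algebraMap (RatFunc ℚ) K (rderiv r)
  y_ne : y ≠ 0
  y_alg : IsAlgebraic (RatFunc ℚ) y
  y_eq : δ y = algebraMap (RatFunc ℚ) K a * y

open scoped Differential

/-- The differential ring given by an additive map satisfying the Leibniz rule. -/
@[reducible]
def mkDifferential {R : Type*} [CommRing R] (d : R → R) (hadd : ∀ u v, d (u + v) = d u + d v)
    (hmul : ∀ u v, d (u * v) = u * d v + v * d u) : Differential R where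
  deriv := Derivation.mk' (AddMonoidHom.mk' d hadd).toIntLinearMap hmul

/-! ### The derivation `d/dx` and logarithmic derivatives in `F(x)` -/

section Rderiv
variable {F L : Type*} [Field F] [Field L]

/-- The quotient rule holds for every representation `p / q`, not only for the reduced one by which
`rderiv` is defined. -/
lemma rderiv_div (p q : F[X]) (hq : q ≠ 0) :
    rderiv (algebraMap F[X] (RatFunc F) p / algebraMap F[X] (RatFunc F) q) =
      algebraMap F[X] (RatFunc F) (derivative p * q - p * derivative q) /
        algebraMap F[X] (RatFunc F) (q ^ 2) := by
  set f := algebraMap F[X] (RatFunc F) p / algebraMap F[X] (RatFunc F) q with hf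
  have h : f.num * q = p * f.denom := (RatFunc.num_mul_eq_mul_denom_iff hq).2 hf
  have h' := congrArg derivative h
  simp only [derivative_mul] at h'
  have hd := f.denom_ne_zero
  rw [rderiv, div_eq_div_iff (by simpa using hd) (by simpa using hq), ← map_mul, ← map_mul]
  congr 1
  linear_combination q * f.denom * h' - (derivative q * f.denom + q * derivative f.denom) * h

lemma rderiv_algebraMap (p : F[X]) :
    rderiv (algebraMap F[X] (RatFunc F) p) = algebraMap F[X] (RatFunc F) (derivative p) := by
  simpa using rderiv_div p 1 one_ne_zero

lemma rderiv_add (f g : RatFunc F) : rderiv (f + g) = rderiv f + rderiv g := by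
  have hf := RatFunc.algebraMap_ne_zero f.denom_ne_zero
  have hg := RatFunc.algebraMap_ne_zero g.denom_ne_zero
  have h : f + g = algebraMap F[X] (RatFunc F) (f.num * g.denom + g.num * f.denom) /
      algebraMap F[X] (RatFunc F) (f.denom * g.denom) := by
    conv_lhs => rw [← f.num_div_denom, ← g.num_div_denom, div_add_div _ _ hf hg]
    simp only [map_add, map_mul]
    ring
  rw [h, rderiv_div _ _ (mul_ne_zero f.denom_ne_zero g.denom_ne_zero), rderiv, rderiv]
  simp only [derivative_mul, map_add, map_sub, map_mul, map_pow]
  field_simp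
  ring

lemma rderiv_mul (f g : RatFunc F) : rderiv (f * g) = f * rderiv g + g * rderiv f := by
  have hf := RatFunc.algebraMap_ne_zero f.denom_ne_zero
  have hg := RatFunc.algebraMap_ne_zero g.denom_ne_zero
  have h : f * g = algebraMap F[X] (RatFunc F) (f.num * g.num) /
      algebraMap F[X] (RatFunc F) (f.denom * g.denom) := by
    conv_lhs => rw [← f.num_div_denom, ← g.num_div_denom, div_mul_div_comm]
    simp only [map_mul]
  have h2 : f * rderiv g + g * rderiv f =
      algebraMap F[X] (RatFunc F) f.num / algebraMap F[X] (RatFunc F) f.denom * rderiv g +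
      algebraMap F[X] (RatFunc F) g.num / algebraMap F[X] (RatFunc F) g.denom * rderiv f := by
    rw [f.num_div_denom, g.num_div_denom]
  rw [h2, h, rderiv_div _ _ (mul_ne_zero f.denom_ne_zero g.denom_ne_zero), rderiv, rderiv]
  simp only [derivative_mul, map_add, map_sub, map_mul, map_pow]
  field_simp
  ring

/-- The differential field `(F(x), d/dx)`. -/
noncomputable instance ratFuncDifferential : Differential (RatFunc F) :=
  mkDifferential rderiv rderiv_add rderiv_mul

lemma deriv_eq_rderiv (f : RatFunc F) : f′ = rderiv f := rfl

/-- Base change `F(x) → L(x)` along `f`, as a ring homomorphism. -/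
noncomputable def ratMap (f : F →+* L) : RatFunc F →+* RatFunc L :=
  RatFunc.mapRingHom (Polynomial.mapRingHom f)
    (nonZeroDivisors_le_comap_nonZeroDivisors_of_injective _ (Polynomial.map_injective f f.injective))

lemma ratMap_apply (f : F →+* L) (r : RatFunc F) : ratMap f r = liftRF f r := by
  simp [ratMap, liftRF, RatFunc.coe_mapRingHom_eq_coe_map, RatFunc.map_apply]

lemma ratMap_algebraMap (f : F →+* L) (p : F[X]) :
    ratMap f (algebraMap F[X] (RatFunc F) p) = algebraMap L[X] (RatFunc L) (p.map f) := by
  have := RatFunc.map_apply_div (Polynomial.mapRingHom f)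
    (nonZeroDivisors_le_comap_nonZeroDivisors_of_injective _
      (Polynomial.map_injective f f.injective)) p 1
  simpa [ratMap, RatFunc.coe_mapRingHom_eq_coe_map] using this

/-- Base change commutes with `d/dx`. -/
lemma rderiv_ratMap (f : F →+* L) (r : RatFunc F) :
    rderiv (ratMap f r) = ratMap f (rderiv r) := by
  rw [ratMap_apply, liftRF,
    rderiv_div _ _ ((Polynomial.map_ne_zero_iff f.injective).2 r.denom_ne_zero), rderiv,
    map_div₀, ratMap_algebraMap, ratMap_algebraMap]
  simp [Polynomial.derivative_map]

open Differential

lemma ratFunc_logDeriv_X_sub_C (c : F) :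
    Differential.logDeriv (RatFunc.X - RatFunc.C c : RatFunc F) = (RatFunc.X - RatFunc.C c)⁻¹ := by
  have h : (RatFunc.X - RatFunc.C c : RatFunc F) = algebraMap F[X] _ (X - C c) := by simp
  rw [Differential.logDeriv, deriv_eq_rderiv]
  conv_lhs => rw [h, rderiv_algebraMap]
  simp

lemma differential_logDeriv_zpow {R : Type*} [Field R] [Differential R] {a : R} (ha : a ≠ 0) (k : ℤ) :
    Differential.logDeriv (a ^ k) = k * Differential.logDeriv a := by
  cases k with
  | ofNat n => simp
  | negSucc n =>
    rw [zpow_negSucc, inv_eq_one_div, Differential.logDeriv_div _ _ one_ne_zero (pow_ne_zero _ ha),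
      Differential.logDeriv_pow, Int.cast_negSucc,
      Differential.logDeriv_one]
    push_cast
    ring

lemma X_sub_C_ne_zero' (c : F) : (RatFunc.X - RatFunc.C c : RatFunc F) ≠ 0 := by
  have h : (RatFunc.X - RatFunc.C c : RatFunc F) = algebraMap F[X] _ (X - C c) := by simp
  rw [h]
  exact RatFunc.algebraMap_ne_zero (X_sub_C_ne_zero c)

/-- Over an algebraically closed field, `p'/p = ∑ 1/(x - c)` over the roots `c` of `p`, counted
with multiplicity. -/
lemma ratFunc_logDeriv_polynomial [IsAlgClosed F] {p : F[X]} (hp : p ≠ 0) :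
    Differential.logDeriv (algebraMap F[X] (RatFunc F) p) =
      (p.roots.map fun c => (RatFunc.X - RatFunc.C c : RatFunc F)⁻¹).sum := by
  have h := congrArg (algebraMap F[X] (RatFunc F)) (IsAlgClosed.splits p).eq_prod_roots
  rw [map_mul, map_multiset_prod, Multiset.map_map] at h
  rw [h, Differential.logDeriv_mul, Differential.logDeriv_multisetProd]
  · have hC : Differential.logDeriv (algebraMap F[X] (RatFunc F) (C p.leadingCoeff)) = 0 := by
      rw [Differential.logDeriv_eq_zero, deriv_eq_rderiv, rderiv_algebraMap]
      simp
    rw [hC, zero_add]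
    congr 1
    refine Multiset.map_congr rfl fun c _ => ?_
    rw [← ratFunc_logDeriv_X_sub_C]
    simp
  · intro c _
    exact RatFunc.algebraMap_ne_zero (X_sub_C_ne_zero c)
  · exact RatFunc.algebraMap_ne_zero (by simpa using hp)
  · refine Multiset.prod_ne_zero fun h0 => ?_
    obtain ⟨c, -, hc⟩ := Multiset.mem_map.1 h0
    exact RatFunc.algebraMap_ne_zero (X_sub_C_ne_zero c) hc

/-- The logarithmic derivative of a nonzero rational function has simple poles and integral
residues, and vanishes at infinity. -/
lemma exists_logDeriv_eq_sum [IsAlgClosed F] {r : RatFunc F} (hr : r ≠ 0) :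
    ∃ (S : Finset F) (k : F → ℤ),
      Differential.logDeriv r = ∑ c ∈ S, (k c : RatFunc F) * (RatFunc.X - RatFunc.C c)⁻¹ := by
  classical
  have hn := RatFunc.num_ne_zero hr
  have hd := r.denom_ne_zero
  refine ⟨r.num.roots.toFinset ∪ r.denom.roots.toFinset,
    fun c => (r.num.roots.count c : ℤ) - r.denom.roots.count c, ?_⟩
  conv_lhs => rw [← r.num_div_denom]
  rw [Differential.logDeriv_div _ _ (RatFunc.algebraMap_ne_zero hn) (RatFunc.algebraMap_ne_zero hd),
    ratFunc_logDeriv_polynomial hn, ratFunc_logDeriv_polynomial hd, Finset.sum_multiset_map_count,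
    Finset.sum_multiset_map_count,
    Finset.sum_subset (s₁ := r.num.roots.toFinset)
      (Finset.subset_union_left (s₂ := r.denom.roots.toFinset)),
    Finset.sum_subset (s₁ := r.denom.roots.toFinset)
      (Finset.subset_union_right (s₁ := r.num.roots.toFinset)),
    ← Finset.sum_sub_distrib]
  · refine Finset.sum_congr rfl fun c _ => ?_
    push_cast
    simp only [nsmul_eq_mul]
    ring
  · intro c _ hc
    simp [Multiset.count_eq_zero_of_notMem (mt Multiset.mem_toFinset.2 hc)]
  · intro c _ hc
    simp [Multiset.count_eq_zero_of_notMem (mt Multiset.mem_toFinset.2 hc)]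

end Rderiv

/-! ### Descending an algebraic solution to `ℚ(x)` -/

section Norm
open Differential

/-- If `y` is algebraic over `F` of degree `n` and `y' = a y`, then the constant coefficient `r` of
the minimal polynomial of `y` satisfies `r' = n a r`. -/
lemma exists_logDeriv_eq_of_isAlgebraic {F K : Type*} [Field F] [Field K] [Differential F]
    [Differential K] [Algebra F K] [DifferentialAlgebra F K] {a : F} {y : K} (hy : y ≠ 0)
    (hya : IsAlgebraic F y) (h : y′ = algebraMap F K a * y) :
    ∃ (n : ℕ) (r : F), n ≠ 0 ∧ r ≠ 0 ∧ Differential.logDeriv r = n * a := by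
  have hi : IsIntegral F y := hya.isIntegral
  set p := minpoly F y with hp
  set n := p.natDegree with hn
  have hr : p.coeff 0 ≠ 0 := minpoly.coeff_zero_ne_zero hi hy
  refine ⟨n, p.coeff 0, (minpoly.natDegree_pos hi).ne', hr, ?_⟩
  -- Differentiating `p(y) = 0` and subtracting `n a p(y)` gives a relation of degree `< n`.
  set q : F[X] := mapCoeffs p + C a * (X * derivative p) - C (n * a) * p with hq
  have hcoeff : ∀ k, q.coeff k = (p.coeff k)′ + a * (k * p.coeff k) - n * a * p.coeff k := by
    intro k
    have : (X * derivative p).coeff k = k * p.coeff k := by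
      cases k with
      | zero => simp
      | succ k => rw [coeff_X_mul, coeff_derivative]; push_cast; ring
    simp only [hq, coeff_sub, coeff_add, coeff_C_mul, this, coeff_mapCoeffs]
  have hq0 : q = 0 := by
    by_contra hne
    have hroot : aeval y q = 0 := by
      have h1 := deriv_aeval_eq y p
      rw [minpoly.aeval, map_zero, h] at h1
      simp only [hq, map_sub, map_add, map_mul, aeval_C, aeval_X, hp, minpoly.aeval] at h1 ⊢
      linear_combination -h1
    refine (minpoly.degree_le_of_ne_zero F y hne hroot).not_gt ?_
    rw [← hp, degree_eq_natDegree (minpoly.ne_zero hi), degree_lt_iff_coeff_zero]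
    intro k hk
    rw [hcoeff]
    rcases hk.eq_or_lt with hk | hk
    · have h1 : p.coeff k = 1 := by rw [← hk]; exact minpoly.monic hi
      have hkn : (k : F) = n := by rw [← hk]
      rw [h1, Derivation.map_one_eq_zero, hkn]
      ring
    · have h1 : p.coeff k = 0 := coeff_eq_zero_of_natDegree_lt hk
      simp [h1]
  have h0 := hcoeff 0
  rw [hq0] at h0
  rw [Differential.logDeriv, div_eq_iff hr]
  simp only [Polynomial.coeff_zero, Nat.cast_zero] at h0
  linear_combination -h0

end Norm

/-! ### Constructing a solution as an `n`-th root -/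

section Converse
open Differential

/-- If `R' / R = n a`, then an `n`-th root `y` of `R`, in the splitting field of `X ^ n - R` with the
extended derivation, satisfies `y' = a y`. -/
lemma exists_solution {F : Type} [Field F] [Differential F] [CharZero F] {n : ℕ} (hn : n ≠ 0)
    {a R : F} (hR : R ≠ 0) (h : Differential.logDeriv R = n * a) :
    ∃ (K : Type) (_ : Field K) (_ : Differential K) (_ : Algebra F K) (_ : DifferentialAlgebra F K)
      (y : K), y ≠ 0 ∧ y ^ n = algebraMap F K R ∧ y′ = algebraMap F K a * y := by
  let P : F[X] := X ^ n - C R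
  let _ : Differential P.SplittingField := differentialFiniteDimensional F _
  have : DifferentialAlgebra F P.SplittingField := differentialAlgebraFiniteDimensional
  obtain ⟨y, hy⟩ := (SplittingField.splits P).exists_eval_eq_zero
    (by rw [degree_map, degree_X_pow_sub_C (Nat.pos_of_ne_zero hn)]; simpa using hn)
  have hyn : y ^ n = algebraMap F _ R := by
    simpa [P, sub_eq_zero] using hy
  have hy0 : y ≠ 0 := by
    rintro rfl
    rw [zero_pow hn] at hyn
    exact hR ((map_eq_zero _).1 hyn.symm)
  refine ⟨P.SplittingField, inferInstance, inferInstance, inferInstance, inferInstance, y, hy0,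
    hyn, ?_⟩
  have h1 := Differential.logDeriv_pow n y
  rw [hyn, Differential.logDeriv_algebraMap, h, map_mul, map_natCast] at h1
  have : CharZero P.SplittingField := charZero_of_injective_algebraMap (algebraMap F _).injective
  have h2 := mul_left_cancel₀ (Nat.cast_ne_zero.2 hn) h1
  rw [h2, Differential.logDeriv, div_mul_cancel₀ _ hy0]

/-- The image of `∏ (x - c i) ^ k i` in an extension of `ℚ̄(x)` is algebraic over `ℚ(x)`, since every `c i` is algebraic over `ℚ`. -/
lemma isAlgebraic_prod {K : Type*} [Field K] (ψ : RatFunc (AlgebraicClosure ℚ) →+* K)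
    [Algebra (RatFunc ℚ) K]
    (hψ : algebraMap (RatFunc ℚ) K = ψ.comp (ratMap (algebraMap ℚ (AlgebraicClosure ℚ))))
    {m : ℕ} (c : Fin m → AlgebraicClosure ℚ) (k : Fin m → ℤ) :
    IsAlgebraic (RatFunc ℚ) (ψ (∏ i, (RatFunc.X - RatFunc.C (c i)) ^ k i)) := by
  have hX : IsAlgebraic (RatFunc ℚ) (ψ RatFunc.X) := by
    have : ψ RatFunc.X = algebraMap (RatFunc ℚ) K RatFunc.X := by
      rw [hψ, RingHom.comp_apply, ← RatFunc.algebraMap_X, ← RatFunc.algebraMap_X,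
        ratMap_algebraMap, Polynomial.map_X]
    rw [this]
    exact isAlgebraic_algebraMap _
  have hC (z : AlgebraicClosure ℚ) : IsAlgebraic (RatFunc ℚ) (ψ (RatFunc.C z)) := by
    obtain ⟨p, hp, hz⟩ := (AlgebraicClosure.isAlgebraic ℚ).isAlgebraic z
    have hinj : Function.Injective (RatFunc.C : ℚ →+* RatFunc ℚ) := RingHom.injective _
    refine ⟨p.map RatFunc.C, (Polynomial.map_ne_zero_iff hinj).2 hp, ?_⟩
    have := congrArg (ψ.comp RatFunc.C) hz
    rw [map_zero, aeval_def, hom_eval₂] at this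
    rw [aeval_def, eval₂_map]
    -- There is at most one ring homomorphism `ℚ → K`.
    have he : (algebraMap (RatFunc ℚ) K).comp RatFunc.C =
        (ψ.comp RatFunc.C).comp (algebraMap ℚ (AlgebraicClosure ℚ)) := Subsingleton.elim _ _
    exact (congrArg (fun g => eval₂ g (ψ (RatFunc.C z)) p) he).trans this
  rw [← mem_algebraicClosure_iff, map_prod]
  refine prod_mem fun i _ => ?_
  rw [map_zpow₀, map_sub]
  exact zpow_mem (sub_mem (mem_algebraicClosure_iff.2 hX) (mem_algebraicClosure_iff.2 (hC _))) _

end Converse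

/-- Let `a(x) ∈ ℚ(x)`.  There exists a nonzero element `y`, algebraic over `ℚ(x)` in
some differential field extension, with `y' = a(x)·y`, if and only if `a(x)` has at most
simple poles with rational residues at every point of `ℚ̄` and vanishes at infinity;
i.e. iff `a(x) = ∑ᵢ eᵢ/(x − aᵢ)` with the `aᵢ` distinct points of `ℚ̄` and `eᵢ ∈ ℚ`
(in which case `∏ᵢ (x − aᵢ)^{eᵢ}` is such an algebraic solution). -/
theorem order_one_algebraic_solution (a : RatFunc ℚ) :
    Nonempty (AlgSolOrderOne a) ↔
      ∃ (m : ℕ) (c : Fin m → AlgebraicClosure ℚ) (e : Fin m → ℚ),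
        Function.Injective c ∧
        liftRF (algebraMap ℚ (AlgebraicClosure ℚ)) a =
          ∑ i : Fin m,
            RatFunc.C ((e i : AlgebraicClosure ℚ)) *
              (RatFunc.X - RatFunc.C (c i))⁻¹ := by
  rw [← ratMap_apply]
  set φ := ratMap (algebraMap ℚ (AlgebraicClosure ℚ)) with hφ
  constructor
  · rintro ⟨⟨K, δ, y, map_add, leibniz, extends_deriv, y_ne, y_alg, y_eq⟩⟩
    let _ : Differential K :=
      mkDifferential δ map_add fun u v => by rw [leibniz]; ring
    have : DifferentialAlgebra (RatFunc ℚ) K := ⟨extends_deriv⟩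
    obtain ⟨n, r, hn, hr, h⟩ := exists_logDeriv_eq_of_isAlgebraic y_ne y_alg (a := a) y_eq
    obtain ⟨S, k, hk⟩ := exists_logDeriv_eq_sum ((map_ne_zero φ).2 hr)
    have hφr : Differential.logDeriv (φ r) = n * φ a := by
      rw [Differential.logDeriv, deriv_eq_rderiv, hφ, rderiv_ratMap, ← map_div₀, ← deriv_eq_rderiv,
        ← Differential.logDeriv, h, map_mul, map_natCast]
    have hn' : (n : RatFunc (AlgebraicClosure ℚ)) ≠ 0 := Nat.cast_ne_zero.2 hn
    refine ⟨S.card, fun i => S.equivFin.symm i, fun i => (k (S.equivFin.symm i) : ℚ) / n,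
      Subtype.val_injective.comp S.equivFin.symm.injective, ?_⟩
    rw [hφr, ← Finset.sum_coe_sort, ← S.equivFin.symm.sum_comp] at hk
    apply mul_left_cancel₀ hn'
    rw [hk, Finset.mul_sum]
    refine Finset.sum_congr rfl fun i _ => ?_
    rw [← mul_assoc]
    congr 1
    push_cast
    rw [map_div₀, map_intCast, map_natCast, mul_div_cancel₀ _ hn']
  · rintro ⟨m, c, e, -, h⟩
    -- `n` is a common denominator of the residues `e i`, and `n * e i = k i`.
    set n : ℕ := ∏ i, (e i).den with hndef
    have hn : n ≠ 0 := Finset.prod_ne_zero_iff.2 fun i _ => (e i).den_ne_zero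
    have hk : ∀ i, ∃ k : ℤ, (k : ℚ) = n * e i := fun i => by
      obtain ⟨d, hd⟩ : (e i).den ∣ n := Finset.dvd_prod_of_mem _ (Finset.mem_univ i)
      refine ⟨d * (e i).num, ?_⟩
      have := Rat.den_mul_eq_num (e i)
      rw [hd]; push_cast
      linear_combination -(d : ℚ) * this
    choose k hk using hk
    set R : RatFunc (AlgebraicClosure ℚ) := ∏ i, (RatFunc.X - RatFunc.C (c i)) ^ k i with hRdef
    have hne : ∀ i ∈ Finset.univ, (RatFunc.X - RatFunc.C (c i)) ^ k i ≠ 0 :=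
      fun i _ => zpow_ne_zero _ (X_sub_C_ne_zero' _)
    have hR : R ≠ 0 := Finset.prod_ne_zero_iff.2 hne
    have hlog : Differential.logDeriv R = n * φ a := by
      rw [hRdef, Differential.logDeriv_prod _ _ _ hne, h, Finset.mul_sum]
      refine Finset.sum_congr rfl fun i _ => ?_
      rw [differential_logDeriv_zpow (X_sub_C_ne_zero' _), ratFunc_logDeriv_X_sub_C, ← mul_assoc]
      congr 1
      have := congrArg (fun q : ℚ => RatFunc.C (q : AlgebraicClosure ℚ)) (hk i)
      simpa using this
    obtain ⟨K, _, _, _, _, y, hy, hyn, hyd⟩ := exists_solution hn hR hlog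
    let ψ := algebraMap (RatFunc (AlgebraicClosure ℚ)) K
    let _ : Algebra (RatFunc ℚ) K := (ψ.comp φ).toAlgebra
    exact ⟨{
      K := K
      δ := fun u => Differential.deriv u
      y := y
      map_add := fun u v => map_add _ u v
      leibniz := fun u v => by
        rw [Derivation.leibniz, smul_eq_mul, smul_eq_mul]; ring
      extends_deriv := fun r => by
        change (ψ (φ r))′ = ψ (φ (rderiv r))
        rw [← rderiv_ratMap, ← deriv_eq_rderiv]
        exact deriv_algebraMap _
      y_ne := hy
      y_alg := by
        refine IsAlgebraic.of_pow (Nat.pos_of_ne_zero hn) ?_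
        rw [hyn]
        exact isAlgebraic_prod ψ rfl c k
      y_eq := hyd }⟩
end

section
/- The power series f(t) = Σ_{n≥0} ((3n)!/n!³)·t^n ∈ ℚ[[t]] satisfies the second-order linear differential equation t(27t − 1)·f''(t) + (54t − 1)·f'(t) + 6·f(t) = 0, and f is transcendental over ℚ(t). -/
/-!
The differential equation is, coefficient by coefficient, the recurrence
`(n + 1)² aₙ₊₁ = 3 (3n + 1) (3n + 2) aₙ` for `aₙ = (3n)!/n!³`.

Transcendence comes from a logarithmic singularity at `t = 1/27`. The recurrence makes
`(n + 1) aₙ / 27ⁿ` decreasing and `n aₙ / 27ⁿ` increasing, so `aₙ / 27ⁿ` lies between two constant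
multiples of `1/n`; summing, `f(u/27)` lies between two constant multiples of `L = -log (1 - u)`
for `1/2 ≤ u < 1` (`sandwich`). If `f` were algebraic, it would satisfy `Q(t, f) = 0` for some
`Q ∈ ℚ[t][y]` not divisible by `t - 1/27` (`exists_not_dvd`). Then `q(y) = Q(1/27, y)` is a nonzero
polynomial, and
`Q(t, y) = q(y) + (t - 1/27) R(t, y)` gives `q(f(t)) = (1/27 - t) R(t, f(t))`.
With `t = (1 - exp (-L)) / 27` and `L → ∞`, the right side is at most `exp (-L)` times a power of
`L`, so it tends to `0`, whereas `f(t) → ∞` keeps the left side away from `0`.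
-/

open PowerSeries Filter Topology

/-- The number `(3n)!/n!³`. -/
noncomputable def diagCoeff (n : ℕ) : ℚ := ((3 * n).factorial : ℚ) / (n.factorial : ℚ) ^ 3

theorem diagCoeff_succ (n : ℕ) :
    ((n : ℚ) + 1) ^ 2 * diagCoeff (n + 1) = (27 * (n : ℚ) ^ 2 + 27 * n + 6) * diagCoeff n := by
  have h : (n.factorial : ℚ) ≠ 0 := by positivity
  have h1 : (n : ℚ) + 1 ≠ 0 := by positivity
  simp only [diagCoeff, show 3 * (n + 1) = 3 * n + 1 + 1 + 1 by ring, Nat.factorial_succ]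
  push_cast
  field_simp
  ring

theorem coeff_derivFun (f : PowerSeries ℚ) (n : ℕ) :
    coeff n (derivativeFun f) = coeff (n + 1) f * ((n : ℚ) + 1) :=
  coeff_derivative f n

theorem diag_ode :
    X * (27 * X - 1) * derivativeFun (derivativeFun (PowerSeries.mk diagCoeff)) +
        (54 * X - 1) * derivativeFun (PowerSeries.mk diagCoeff) +
        6 * (PowerSeries.mk diagCoeff) = 0 := by
  set f := PowerSeries.mk diagCoeff with hf
  have e : X * (27 * X - 1) * derivativeFun (derivativeFun f) +
        (54 * X - 1) * derivativeFun f + 6 * f =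
      C 27 * (X * (X * derivativeFun (derivativeFun f))) - X * derivativeFun (derivativeFun f)
      + C 54 * (X * derivativeFun f) - derivativeFun f + C 6 * f := by
    simp only [map_ofNat]; ring
  rw [e]
  ext n
  have := diagCoeff_succ n
  rcases n with _ | _ | n <;>
  simp only [map_add, map_sub, coeff_C_mul, coeff_succ_X_mul, coeff_zero_X_mul,
    coeff_derivFun, hf, coeff_mk, map_zero] <;> push_cast at this ⊢ <;> linear_combination -this

/-! ### Evaluating power series at a real point -/

/-- The series `F` converges absolutely at the real point `x`, with sum `v`. -/
def EvalsTo (x : ℝ) (F : PowerSeries ℚ) (v : ℝ) : Prop :=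
  Summable (fun n => ‖((coeff n F : ℚ) : ℝ) * x ^ n‖) ∧
    HasSum (fun n => ((coeff n F : ℚ) : ℝ) * x ^ n) v

theorem EvalsTo.add {x : ℝ} {F G : PowerSeries ℚ} {v w : ℝ} (hF : EvalsTo x F v)
    (hG : EvalsTo x G w) : EvalsTo x (F + G) (v + w) := by
  have e : (fun n => ((coeff n (F + G) : ℚ) : ℝ) * x ^ n) =
      fun n => ((coeff n F : ℚ) : ℝ) * x ^ n + ((coeff n G : ℚ) : ℝ) * x ^ n := by
    ext n; simp [add_mul]
  refine ⟨?_, by rw [e]; exact hF.2.add hG.2⟩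
  refine Summable.of_nonneg_of_le (fun n => norm_nonneg _) (fun n => ?_) (hF.1.add hG.1)
  rw [congrFun e n]
  exact norm_add_le _ _

theorem EvalsTo.mul {x : ℝ} {F G : PowerSeries ℚ} {v w : ℝ} (hF : EvalsTo x F v)
    (hG : EvalsTo x G w) : EvalsTo x (F * G) (v * w) := by
  have e : (fun n => ((coeff n (F * G) : ℚ) : ℝ) * x ^ n) =
      fun n => ∑ kl ∈ Finset.HasAntidiagonal.antidiagonal n,
        (((coeff kl.1 F : ℚ) : ℝ) * x ^ kl.1) * (((coeff kl.2 G : ℚ) : ℝ) * x ^ kl.2) := by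
    ext n
    rw [coeff_mul, Rat.cast_sum, Finset.sum_mul]
    refine Finset.sum_congr rfl fun kl h => ?_
    rw [← Finset.HasAntidiagonal.mem_antidiagonal.1 h, pow_add]
    push_cast
    ring
  have hs := summable_norm_sum_mul_antidiagonal_of_summable_norm hF.1 hG.1
  have ht := tsum_mul_tsum_eq_tsum_sum_antidiagonal_of_summable_norm hF.1 hG.1
  rw [hF.2.tsum_eq, hG.2.tsum_eq] at ht
  rw [ht]
  refine ⟨?_, by rw [e]; exact hs.of_norm.hasSum⟩
  simpa only [← congrFun e] using hs

theorem evalsTo_C (x : ℝ) (a : ℚ) : EvalsTo x (C a) a := by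
  have h0 : ∀ n : ℕ, n ≠ 0 → ((coeff n (C a) : ℚ) : ℝ) * x ^ n = 0 := fun n hn => by
    simp [coeff_C, hn]
  refine ⟨summable_of_ne_finset_zero (s := {0}) fun n hn => ?_, ?_⟩
  · rw [h0 n (by simpa using hn), norm_zero]
  · simpa using hasSum_single 0 h0

theorem evalsTo_X (x : ℝ) : EvalsTo x X x := by
  have h0 : ∀ n : ℕ, n ≠ 1 → ((coeff n (X : PowerSeries ℚ) : ℚ) : ℝ) * x ^ n = 0 := fun n hn => by
    simp [coeff_X, hn]
  refine ⟨summable_of_ne_finset_zero (s := {1}) fun n hn => ?_, ?_⟩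
  · rw [h0 n (by simpa using hn), norm_zero]
  · simpa using hasSum_single 1 h0

theorem evalsTo_polynomial (x : ℝ) (p : Polynomial ℚ) :
    EvalsTo x (p : PowerSeries ℚ) (Polynomial.aeval x p) := by
  induction p using Polynomial.induction_on' with
  | add p q hp hq => simpa using hp.add hq
  | monomial n a =>
    rw [← Polynomial.C_mul_X_pow_eq_monomial]
    have hX : ∀ k : ℕ, EvalsTo x (X ^ k) (x ^ k) := fun k => by
      induction k with
      | zero => simpa using evalsTo_C x 1
      | succ k ih => simpa [pow_succ] using ih.mul (evalsTo_X x)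
    simpa using (evalsTo_C x a).mul (hX n)

theorem EvalsTo.aeval {x : ℝ} {F : PowerSeries ℚ} {v : ℝ} (hF : EvalsTo x F v)
    (P : Polynomial (Polynomial ℚ)) :
    EvalsTo x (Polynomial.aeval F P)
      (P.eval₂ (Polynomial.aeval x : Polynomial ℚ →ₐ[ℚ] ℝ).toRingHom v) := by
  induction P using Polynomial.induction_on' with
  | add p q hp hq => simpa [Polynomial.eval₂_add] using hp.add hq
  | monomial n a =>
    have hp : ∀ k : ℕ, EvalsTo x (F ^ k) (v ^ k) := fun k => by
      induction k with
      | zero => simpa using evalsTo_C x 1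
      | succ k ih => simpa [pow_succ] using ih.mul hF
    simpa [Polynomial.aeval_monomial, Polynomial.eval₂_monomial, algebraMap_apply'] using
      (evalsTo_polynomial x a).mul (hp n)

theorem EvalsTo.unique {x : ℝ} {F : PowerSeries ℚ} {v w : ℝ} (hv : EvalsTo x F v)
    (hw : EvalsTo x F w) : v = w := hv.2.unique hw.2

/-! ### Growth of the diagonal at its singularity -/

theorem diagCoeff_pos (n : ℕ) : 0 < diagCoeff n := by
  unfold diagCoeff; positivity

/-- The bound `aₙ ≤ 27ⁿ / (n + 1)`; it propagates because
`(n + 2) (27n² + 27n + 6) ≤ 27 (n + 1)³`. -/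
theorem diagCoeff_le (n : ℕ) : diagCoeff n * (n + 1) ≤ 27 ^ n := by
  induction n with
  | zero => simp [diagCoeff]
  | succ n ih =>
    have h := diagCoeff_succ n
    have hp := diagCoeff_pos n
    have hn : (0 : ℚ) ≤ n := n.cast_nonneg
    have h3 : (0 : ℚ) < ((n : ℚ) + 1) ^ 2 := by positivity
    push_cast
    refine le_of_mul_le_mul_left ?_ h3
    calc ((n : ℚ) + 1) ^ 2 * (diagCoeff (n + 1) * (n + 1 + 1))
        = diagCoeff n * ((27 * (n : ℚ) ^ 2 + 27 * n + 6) * (n + 2)) := by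
          linear_combination (n + 2 : ℚ) * h
      _ ≤ diagCoeff n * (27 * (n + 1) ^ 3) :=
          mul_le_mul_of_nonneg_left (by nlinarith) hp.le
      _ = ((n : ℚ) + 1) ^ 2 * 27 * (diagCoeff n * (n + 1)) := by ring
      _ ≤ ((n : ℚ) + 1) ^ 2 * 27 * 27 ^ n := by gcongr
      _ = _ := by ring

/-- The bound `aₙ ≥ (2/9) 27ⁿ / n` for `n ≥ 1`, an equality at `n = 1`; it propagates because
`27 n (n + 1) ≤ 27n² + 27n + 6`. -/
theorem le_diagCoeff (n : ℕ) : 2 / 9 * 27 ^ (n + 1) ≤ diagCoeff (n + 1) * (n + 1) := by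
  induction n with
  | zero => norm_num [diagCoeff, Nat.factorial]
  | succ n ih =>
    have h := diagCoeff_succ (n + 1)
    have hp := diagCoeff_pos (n + 1)
    have hn : (0 : ℚ) ≤ n := n.cast_nonneg
    have h3 : (0 : ℚ) < (n : ℚ) + 2 := by positivity
    push_cast at h ⊢
    refine le_of_mul_le_mul_left ?_ h3
    calc ((n : ℚ) + 2) * (2 / 9 * 27 ^ (n + 1 + 1))
        = (n + 2) * 27 * (2 / 9 * 27 ^ (n + 1)) := by ring
      _ ≤ (n + 2) * 27 * (diagCoeff (n + 1) * (n + 1)) := by gcongr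
      _ = diagCoeff (n + 1) * (27 * ((n + 2) * (n + 1))) := by ring
      _ ≤ diagCoeff (n + 1) * (27 * ((n : ℚ) + 1) ^ 2 + 27 * (n + 1) + 6) :=
          mul_le_mul_of_nonneg_left (by nlinarith) hp.le
      _ = _ := by linear_combination -h

/-- For `1/2 ≤ u < 1`, at `t = u/27` the diagonal is comparable to `-log (1 - u)`. -/
theorem sandwich (u : ℝ) (h0 : 1 / 2 ≤ u) (h1 : u < 1) :
    ∃ v, EvalsTo (u / 27) (PowerSeries.mk diagCoeff) v ∧
      2 / 9 * (-Real.log (1 - u)) ≤ v ∧ v ≤ 2 * (-Real.log (1 - u)) := by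
  have hu : 0 < u := by linarith
  have hlog := Real.hasSum_pow_div_log_of_abs_lt_one (x := u) (by rw [abs_lt]; constructor <;> linarith)
  have hup : ∀ n : ℕ, (diagCoeff n : ℝ) * (u / 27) ^ n ≤ 2 * (u ^ (n + 1) / (n + 1)) := fun n => by
    have h : (diagCoeff n : ℝ) * (n + 1) ≤ 27 ^ n := by exact_mod_cast diagCoeff_le n
    rw [div_pow, ← mul_div_assoc, div_le_iff₀ (by positivity), mul_div_assoc', div_mul_eq_mul_div,
      le_div_iff₀ (by positivity)]
    calc (diagCoeff n : ℝ) * u ^ n * (n + 1) = (diagCoeff n * (n + 1)) * u ^ n * 1 := by ring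
      _ ≤ 27 ^ n * u ^ n * (2 * u) := by gcongr; linarith
      _ = _ := by ring
  have hlo : ∀ n : ℕ, 2 / 9 * (u ^ (n + 1) / (n + 1)) ≤
      (diagCoeff (n + 1) : ℝ) * (u / 27) ^ (n + 1) := fun n => by
    have h : 2 / 9 * 27 ^ (n + 1) ≤ (diagCoeff (n + 1) : ℝ) * (n + 1) := by
      have h := (Rat.cast_le (K := ℝ)).2 (le_diagCoeff n)
      push_cast at h
      exact h
    rw [div_pow, ← mul_div_assoc, ← mul_div_assoc, div_le_div_iff₀ (by positivity) (by positivity)]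
    calc 2 / 9 * u ^ (n + 1) * 27 ^ (n + 1) = (2 / 9 * 27 ^ (n + 1)) * u ^ (n + 1) := by ring
      _ ≤ (diagCoeff (n + 1) * (n + 1)) * u ^ (n + 1) := by gcongr
      _ = _ := by ring
  have hpos : ∀ n : ℕ, 0 ≤ (diagCoeff n : ℝ) * (u / 27) ^ n := fun n => by
    have : (0 : ℝ) < diagCoeff n := by exact_mod_cast diagCoeff_pos n
    positivity
  have hs : Summable fun n : ℕ => (diagCoeff n : ℝ) * (u / 27) ^ n :=
    Summable.of_nonneg_of_le hpos hup (hlog.summable.mul_left 2)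
  refine ⟨_, ⟨?_, by simpa using hs.hasSum⟩, ?_, ?_⟩
  · simpa using hs.norm
  · rw [hs.tsum_eq_zero_add]
    have := (hlog.mul_left (2 / 9)).tsum_eq ▸
      (hlog.summable.mul_left (2 / 9)).tsum_le_tsum hlo ((summable_nat_add_iff 1).2 hs)
    linarith [hpos 0]
  · exact (hlog.mul_left 2).tsum_eq ▸ hs.tsum_le_tsum hup (hlog.summable.mul_left 2)

/-! ### Transcendence -/

/-- An algebraic relation over `ℚ[t]` may be cleared of its powers of `t - a`. -/
theorem exists_not_dvd {f : PowerSeries ℚ} (hf : IsAlgebraic (Polynomial ℚ) f) (a : ℚ) :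
    ∃ Q : Polynomial (Polynomial ℚ), Polynomial.aeval f Q = 0 ∧
      ¬ Polynomial.C (Polynomial.X - Polynomial.C a) ∣ Q := by
  obtain ⟨P, hP, hPf⟩ := hf
  have hu : ¬ IsUnit (Polynomial.C (Polynomial.X - Polynomial.C a)) := by
    rw [Polynomial.isUnit_C]
    exact Polynomial.not_isUnit_X_sub_C a
  obtain ⟨Q, hQ, hnd⟩ := (FiniteMultiplicity.of_not_isUnit hu hP).exists_eq_pow_mul_and_not_dvd
  refine ⟨Q, ?_, hnd⟩
  rw [hQ, map_mul, map_pow, Polynomial.aeval_C, mul_eq_zero] at hPf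
  refine hPf.resolve_left (pow_ne_zero _ ?_)
  rw [algebraMap_apply', Algebra.algebraMap_self, PowerSeries.map_id, id_eq]
  exact_mod_cast Polynomial.X_sub_C_ne_zero a

/-- A series whose sum at `t = a (1 - exp (-L))` is comparable to `L` as `L → ∞` is not algebraic:
an algebraic function unbounded at `a` would grow at least like a power of `1 / (a - t)`. -/
theorem not_isAlgebraic_of_log_growth {f : PowerSeries ℚ} {a : ℚ} {y : ℝ → ℝ} {c d : ℝ}
    (hc : 0 < c)
    (hy : ∀ᶠ L in atTop, EvalsTo ((1 - Real.exp (-L)) * a) f (y L) ∧ c * L ≤ y L ∧ y L ≤ d * L) :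
    ¬ IsAlgebraic (Polynomial ℚ) f := by
  intro hf
  obtain ⟨Q, hQf, hQ⟩ := exists_not_dvd hf a
  have hytop : Tendsto y atTop atTop :=
    tendsto_atTop_mono' _ (hy.mono fun L h => h.2.1) (tendsto_id.const_mul_atTop hc)
  let q : Polynomial ℝ := Q.map (Polynomial.aeval (a : ℝ) : Polynomial ℚ →ₐ[ℚ] ℝ).toRingHom
  have hq : q ≠ 0 := by
    intro h
    refine hQ ((Polynomial.C_dvd_iff_dvd_coeff _ _).2 fun i => ?_)
    rw [Polynomial.dvd_iff_isRoot]
    have := congrArg (fun p => Polynomial.coeff p i) h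
    simp only [q, Polynomial.coeff_map, Polynomial.coeff_zero] at this
    have h2 : (((Q.coeff i).eval a : ℚ) : ℝ) = 0 := by
      rw [← this]
      exact (Polynomial.aeval_algebraMap_apply_eq_algebraMap_eval a (Q.coeff i)).symm
    exact_mod_cast h2
  have hlim : Tendsto (fun L => q.eval (y L)) atTop (𝓝 0) := by
    have hx : Tendsto (fun L : ℝ => (1 - Real.exp (-L)) * a) atTop (𝓝 ((1 - 0) * (a : ℝ))) :=
      ((Real.tendsto_exp_neg_atTop_nhds_zero).const_sub 1).mul_const _
    -- `r i` is the coefficient of `yⁱ` in `R`, where `Q(t, y) = Q(a, y) + (t - a) R(t, y)`.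
    choose r hr using fun i => Polynomial.X_sub_C_dvd_sub_C_eval (a := a) (p := Q.coeff i)
    have hterm : ∀ i, Tendsto (fun L => (a : ℝ) *
        Polynomial.aeval ((1 - Real.exp (-L)) * (a : ℝ)) (r i) * (Real.exp (-L) * y L ^ i)) atTop (𝓝 0) := fun i => by
      have h1 : Tendsto (fun L => Real.exp (-L) * y L ^ i) atTop (𝓝 0) := by
        have h2 := (Real.tendsto_pow_mul_exp_neg_atTop_nhds_zero i).const_mul (d ^ i)
        rw [mul_zero] at h2
        refine squeeze_zero' ?_ ?_ h2
        · filter_upwards [hy, eventually_ge_atTop 0] with L h hL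
          have : 0 ≤ y L := le_trans (by positivity) h.2.1
          positivity
        · filter_upwards [hy, eventually_ge_atTop 0] with L h hL
          have : 0 ≤ y L := le_trans (by positivity) h.2.1
          calc Real.exp (-L) * y L ^ i ≤ Real.exp (-L) * (d * L) ^ i := by gcongr; exact h.2.2
            _ = _ := by ring
      have h3 := ((((r i).continuous_aeval (A := ℝ)).tendsto _).comp hx).const_mul (a : ℝ)
      simpa using h3.mul h1
    have hsum := tendsto_finsetSum (Finset.range (Q.natDegree + 1)) fun i _ => hterm i
    rw [Finset.sum_const_zero] at hsum
    refine hsum.congr' ?_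
    filter_upwards [hy] with L h
    have hz := h.1.aeval Q
    rw [hQf] at hz
    replace hz := hz.unique (w := 0) (by simpa using evalsTo_C ((1 - Real.exp (-L)) * a) 0)
    rw [Polynomial.eval₂_eq_sum_range] at hz
    simp only [q, Polynomial.eval_map]
    rw [Polynomial.eval₂_eq_sum_range]
    conv_rhs => rw [← sub_zero (Finset.sum _ _), ← hz, ← Finset.sum_sub_distrib]
    refine Finset.sum_congr rfl fun i _ => ?_
    have e1 := congrArg (Polynomial.aeval ((1 - Real.exp (-L)) * (a : ℝ))) (hr i)
    have e2 := Polynomial.aeval_algebraMap_apply_eq_algebraMap_eval (A := ℝ) a (Q.coeff i)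
    simp only [map_sub, map_mul, Polynomial.aeval_X, Polynomial.aeval_C, eq_ratCast] at e1 e2
    simp only [AlgHom.toRingHom_eq_coe, RingHom.coe_coe]
    rw [e2]
    linear_combination y L ^ i * e1
  by_cases hd : 0 < q.degree
  · have h1 := (q.abs_tendsto_atTop hd).comp hytop
    exact not_tendsto_nhds_of_tendsto_atTop h1 _ hlim.abs
  · have e := Polynomial.eq_C_of_degree_le_zero (not_lt.1 hd)
    rw [e] at hlim hq
    simp only [Polynomial.eval_C] at hlim
    exact hq (by rw [← tendsto_nhds_unique hlim tendsto_const_nhds, Polynomial.C_0])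

theorem diag_transcendental :
    Transcendental (Polynomial ℚ) (PowerSeries.mk diagCoeff) := by
  choose! v hv using sandwich
  refine not_isAlgebraic_of_log_growth (a := 1 / 27) (y := fun L => v (1 - Real.exp (-L)))
    (c := 2 / 9) (d := 2) (by norm_num) ?_
  have h := Real.tendsto_exp_neg_atTop_nhds_zero.eventually_le_const
    (show (0 : ℝ) < 1 / 2 by norm_num)
  filter_upwards [h] with L hL
  have := hv (1 - Real.exp (-L)) (by linarith) (by linarith [Real.exp_pos (-L)])
  simpa [div_eq_mul_inv] using this

/-- The power series `f(t) = ∑ ((3n)!/n!³) tⁿ ∈ ℚ⟦t⟧` (the diagonal of `1/(1−x−y−z)`)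
satisfies the second-order linear differential equation
`t(27t − 1)f'' + (54t − 1)f' + 6f = 0`, and `f` is transcendental over `ℚ(t)`. -/
theorem diag_three_vars_ode_and_transcendental :
    let f : PowerSeries ℚ :=
      PowerSeries.mk fun n => ((3 * n).factorial : ℚ) / (n.factorial : ℚ) ^ 3
    X * (27 * X - 1) * derivativeFun (derivativeFun f) +
        (54 * X - 1) * derivativeFun f + 6 * f = 0 ∧
      Transcendental (Polynomial ℚ) f :=
  ⟨diag_ode, diag_transcendental⟩
end
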